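/- arXiv:2510.00987 — 12 statements merged into one kernel-verified Lean document; each statement's English description precedes it below -/
import Mathlib

section
/- Let U be a regular open subset of ℝ (i.e. U = interior(closure U)) with the usual topology. Then U ∪ {0} = ⋂_{n ∈ ℕ, n ≥ 1} interior(closure(U) ∪ [-1/n, 1/n]). -/
/-- Let U be a regular open subset of ℝ (i.e. `U = interior (closure U)`)
with the usual topology. Then
`U ∪ {0} = ⋂_{n ∈ ℕ, n ≥ 1} interior (closure U ∪ [-1/n, 1/n])`. -/
theorem union_zero_eq_iInter_interior_closure_union_Icc
    (U : Set ℝ) (hU : U = interior (closure U)) :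
    U ∪ {0} =
      ⋂ (n : ℕ) (_ : 1 ≤ n),
        interior (closure U ∪ Set.Icc (-(1 / (n : ℝ))) (1 / (n : ℝ))) := by
  ext x
  simp only [Set.mem_union, Set.mem_singleton_iff, Set.mem_iInter]
  constructor
  · rintro (hx | rfl) n hn
    · rw [hU] at hx
      exact interior_mono Set.subset_union_left hx
    · have hpos : (0 : ℝ) < 1 / (n : ℝ) := by
        have : (0 : ℝ) < n := by exact_mod_cast hn
        positivity
      apply interior_mono Set.subset_union_right
      rw [interior_Icc]
      exact ⟨by linarith, hpos⟩
  · intro h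
    by_cases hx : x = 0
    · exact Or.inr hx
    left
    obtain ⟨n, hn⟩ := exists_nat_one_div_lt (abs_pos.mpr hx)
    have h1 := h (n + 1) (by omega)
    push_cast at h1
    rw [hU]
    have hxc : x ∈ (Set.Icc (-(1 / ((n : ℝ) + 1))) (1 / ((n : ℝ) + 1)))ᶜ := by
      intro hm
      exact absurd (abs_le.mpr hm) (not_le.mpr hn)
    refine mem_interior.mpr ⟨_, ?_, isOpen_interior.inter isClosed_Icc.isOpen_compl, h1, hxc⟩
    rintro y ⟨hy, hyc⟩
    exact (interior_subset hy).resolve_right hyc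
end

section
/- Let U be a regular open subset of ℝ with the usual topology. Then U ∪ {0} = ⋂_{n ∈ ℕ, n ≥ 1} interior(closure(U ∪ (-1/n, 1/n))). -/
/-- Let U be a regular open subset of ℝ with the usual topology. Then
`U ∪ {0} = ⋂_{n ∈ ℕ, n ≥ 1} interior (closure (U ∪ (-1/n, 1/n)))`. -/
theorem union_zero_eq_iInter_interior_closure_union_Ioo
    (U : Set ℝ) (hU : U = interior (closure U)) :
    U ∪ {0} =
      ⋂ (n : ℕ) (_ : 1 ≤ n),
        interior (closure (U ∪ Set.Ioo (-(1 / (n : ℝ))) (1 / (n : ℝ)))) := by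
  have hUo : IsOpen U := by rw [hU]; exact isOpen_interior
  apply Set.Subset.antisymm
  · intro x hx
    simp only [Set.mem_iInter]
    intro n hn
    apply interior_maximal subset_closure (hUo.union isOpen_Ioo)
    rcases hx with hx | hx
    · exact Or.inl hx
    · right
      have hx0 : x = 0 := hx
      have hn' : (0 : ℝ) < 1 / (n : ℝ) := by
        have : (0 : ℝ) < n := by exact_mod_cast hn
        positivity
      subst hx0
      exact ⟨by linarith, hn'⟩
  · intro x hx
    simp only [Set.mem_iInter] at hx
    by_cases hx0 : x = 0
    · exact Or.inr hx0
    left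
    obtain ⟨n, hn⟩ := exists_nat_one_div_lt (abs_pos.mpr hx0)
    have h := hx (n + 1) (by omega)
    push_cast at h
    set r : ℝ := 1 / ((n : ℝ) + 1) with hr
    rw [hU]
    refine interior_maximal (s := closure U)
      (t := interior (closure (U ∪ Set.Ioo (-r) r)) ∩ (Set.Icc (-r) r)ᶜ) ?_
      (isOpen_interior.inter isClosed_Icc.isOpen_compl) ⟨h, ?_⟩
    · rintro y ⟨hy, hy'⟩
      have hy2 := interior_subset hy
      rw [closure_union] at hy2
      rcases hy2 with hy2 | hy2
      · exact hy2
      · exact absurd (closure_minimal Set.Ioo_subset_Icc_self isClosed_Icc hy2) hy'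
    · intro hxI
      exact absurd (abs_le.mpr hxI) (not_le.mpr hn)
end

section
/- For every open set U ⊆ ℝ and every regular open set V ⊆ ℝ with U ⊆ V, there exists a sequence of pairs (Uₙ, Vₙ)_{n ≥ 1} with each Uₙ open in ℝ, each Vₙ regular open in ℝ, Uₙ ⊆ Vₙ, ((-1/n,1/n) \ {0}) ⊆ Uₙ and (-1/n,1/n) ⊆ Vₙ for all n, such that interior(⋂ₙ Uₙ) = U and interior(⋂ₙ Vₙ) = V. (Indeed one may take Uₙ = ((-1/n,1/n) \ {0}) ∪ U and Vₙ = interior(closure((-1/n,1/n) ∪ V)).) -/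
/-- For every open set `U ⊆ ℝ` and every regular open set `V ⊆ ℝ` with
`U ⊆ V`, there exists a sequence of pairs `(Uₙ, Vₙ)` (for `n ≥ 1`) with each `Uₙ` open
in ℝ, each `Vₙ` regular open in ℝ, `Uₙ ⊆ Vₙ`, `((-1/n, 1/n) \ {0}) ⊆ Uₙ` and
`(-1/n, 1/n) ⊆ Vₙ` for all `n`, such that `interior (⋂ₙ Uₙ) = U` and
`interior (⋂ₙ Vₙ) = V`. -/
theorem exists_sequence_of_pairs_inf_eq
    (U V : Set ℝ) (hU : IsOpen U) (hV : V = interior (closure V)) (hUV : U ⊆ V) :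
    ∃ Us Vs : ℕ → Set ℝ,
      (∀ n, 1 ≤ n → IsOpen (Us n)) ∧
      (∀ n, 1 ≤ n → Vs n = interior (closure (Vs n))) ∧
      (∀ n, 1 ≤ n → Us n ⊆ Vs n) ∧
      (∀ n : ℕ, 1 ≤ n → Set.Ioo (-(1 / (n : ℝ))) (1 / (n : ℝ)) \ {0} ⊆ Us n) ∧
      (∀ n : ℕ, 1 ≤ n → Set.Ioo (-(1 / (n : ℝ))) (1 / (n : ℝ)) ⊆ Vs n) ∧
      interior (⋂ (n : ℕ) (_ : 1 ≤ n), Us n) = U ∧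
      interior (⋂ (n : ℕ) (_ : 1 ≤ n), Vs n) = V := by
  have hVo : IsOpen V := by rw [hV]; exact isOpen_interior
  have key : ∀ x : ℝ, x ≠ 0 → ∃ n : ℕ, 1 ≤ n ∧
      x ∉ Set.Icc (-(1 / (n : ℝ))) (1 / (n : ℝ)) := by
    intro x hx
    obtain ⟨n, hn⟩ := exists_nat_one_div_lt (abs_pos.mpr hx)
    refine ⟨n + 1, by omega, fun h => ?_⟩
    push_cast at h
    have := abs_le.mpr h
    linarith
  have hIV : ∀ n : ℕ, Set.Ioo (-(1 / (n : ℝ))) (1 / (n : ℝ)) ∪ V ⊆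
      interior (closure (Set.Ioo (-(1 / (n : ℝ))) (1 / (n : ℝ)) ∪ V)) := fun n =>
    (isOpen_Ioo.union hVo).subset_interior_closure
  refine ⟨fun n => (Set.Ioo (-(1 / (n : ℝ))) (1 / (n : ℝ)) \ {0}) ∪ U,
    fun n => interior (closure (Set.Ioo (-(1 / (n : ℝ))) (1 / (n : ℝ)) ∪ V)),
    ?_, ?_, ?_, ?_, ?_, ?_, ?_⟩
  · intro n _
    exact (isOpen_Ioo.sdiff isClosed_singleton).union hU
  · intro n _
    exact interior_closure_idem.symm
  · intro n _
    exact (Set.union_subset_union Set.diff_subset hUV).trans (hIV n)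
  · intro n _
    exact Set.subset_union_left
  · intro n _
    exact Set.subset_union_left.trans (hIV n)
  · apply Set.Subset.antisymm
    · intro x hx
      have hx := Set.mem_iInter₂.mp (interior_subset hx)
      by_cases h0 : x = 0
      · rcases hx 1 le_rfl with h | h
        · exact absurd h0 h.2
        · exact h
      · obtain ⟨n, hn, hxn⟩ := key x h0
        rcases hx n hn with h | h
        · exact absurd (Set.Ioo_subset_Icc_self h.1) hxn
        · exact h
    · exact interior_maximal (Set.subset_iInter₂ fun n _ => Set.subset_union_right) hU
  · apply Set.Subset.antisymm
    · set W := interior (⋂ (n : ℕ) (_ : 1 ≤ n),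
        interior (closure (Set.Ioo (-(1 / (n : ℝ))) (1 / (n : ℝ)) ∪ V))) with hW
      have hWo : IsOpen W := isOpen_interior
      have h1 : W ∩ {0}ᶜ ⊆ closure V := by
        rintro x ⟨hx, h0⟩
        obtain ⟨n, hn, hxn⟩ := key x h0
        have hx := interior_subset (Set.mem_iInter₂.mp (interior_subset hx) n hn)
        rw [closure_union] at hx
        rcases hx with h | h
        · exact absurd (closure_minimal Set.Ioo_subset_Icc_self isClosed_Icc h) hxn
        · exact h
      have h2 : W ⊆ closure V :=
        ((dense_compl_singleton (0 : ℝ)).open_subset_closure_inter hWo).trans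
          (closure_minimal h1 isClosed_closure)
      rw [hV]
      exact interior_maximal h2 hWo
    · exact interior_maximal
        (Set.subset_iInter₂ fun n _ => Set.subset_union_right.trans (hIV n)) hVo
end

section
/- Let L be a frame. Then S_c(L) is weakly subfit if and only if every proper open sublocale of L is contained in a proper element of S_c(L). Here S_c(L) is weakly subfit means: for every S ∈ S_c(L) with S ≠ {⊤}, there exists T ∈ S_c(L) with T ≠ L and S ⋁ T = L. -/
/-- The join, in the coframe of sublocales of a frame `L`, of a collection `𝒮` of
sublocales (given as subsets of `L`): it consists of all infima of subsets of `⋃₀ 𝒮`. -/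
def Sublocale.join {L : Type*} [Order.Frame L] (𝒮 : Set (Set L)) : Set L :=
  {x | ∃ M : Set L, M ⊆ ⋃₀ 𝒮 ∧ x = sInf M}

/-- The closed sublocale `c(a) = {x ∈ L | a ≤ x}` of a frame `L`. -/
def Sublocale.closed {L : Type*} [Order.Frame L] (a : L) : Set L :=
  {x | a ≤ x}

/-- The open sublocale `o(a) = {a ⇨ b | b ∈ L}` of a frame `L`. -/
def Sublocale.open' {L : Type*} [Order.Frame L] (a : L) : Set L :=
  {x | ∃ b : L, x = a ⇨ b}

/-- `S_c(L)`: the collection of all joins of families of closed sublocales of `L`. -/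
def Sc (L : Type*) [Order.Frame L] : Set (Set L) :=
  {S | ∃ A : Set L, S = Sublocale.join (Sublocale.closed '' A)}

theorem Sublocale.mem_join_iff_aux {L : Type*} [Order.Frame L] (F : Set (Set L)) (x : L) :
    x ∈ Sublocale.join F ↔ ∀ z, (∀ y ∈ ⋃₀ F, x ≤ y → z ≤ y) → z ≤ x := by
  constructor
  · rintro ⟨M, hM, rfl⟩ z hz
    exact le_sInf fun m hm => hz m (hM hm) (sInf_le hm)
  · intro h
    refine ⟨{y | y ∈ ⋃₀ F ∧ x ≤ y}, fun y hy => hy.1, le_antisymm ?_ ?_⟩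
    · exact le_sInf fun y hy => hy.2
    · exact h _ fun y hy hxy => sInf_le ⟨hy, hxy⟩

/-- Let `L` be a frame. Then `S_c(L)` is weakly subfit (for every
`S ∈ S_c(L)` with `S ≠ {⊤}` there is `T ∈ S_c(L)` with `T ≠ L` and `S ⋁ T = L`)
if and only if every proper open sublocale of `L` is contained in a proper element
of `S_c(L)`. -/
theorem Sc_weaklySubfit_iff_proper_open_subset_proper_joinClosed
    {L : Type*} [Order.Frame L] :
    (∀ S ∈ Sc L, S ≠ {(⊤ : L)} →
        ∃ T ∈ Sc L, T ≠ (Set.univ : Set L) ∧ Sublocale.join {S, T} = Set.univ) ↔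
    (∀ a : L, Sublocale.open' a ≠ (Set.univ : Set L) →
        ∃ T ∈ Sc L, T ≠ (Set.univ : Set L) ∧ Sublocale.open' a ⊆ T) := by
  constructor
  · intro h a ha
    have ha' : a ≠ ⊤ := by
      rintro rfl
      exact ha (Set.eq_univ_of_forall fun x => ⟨x, by simp⟩)
    have hS : Sublocale.join (Sublocale.closed '' {a}) ≠ {(⊤ : L)} := by
      intro hE
      have h1 : a ∈ Sublocale.join (Sublocale.closed '' {a}) :=
        ⟨{a}, by simp [Sublocale.closed], by simp⟩
      rw [hE] at h1
      exact ha' h1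
    obtain ⟨T, ⟨A, rfl⟩, hT, hj⟩ := h _ ⟨{a}, rfl⟩ hS
    refine ⟨_, ⟨A, rfl⟩, hT, ?_⟩
    rintro x ⟨b, hb⟩
    rw [Sublocale.mem_join_iff_aux]
    intro z hz
    have hx := Set.mem_univ x
    rw [← hj, Sublocale.mem_join_iff_aux] at hx
    have key : z ⊓ a ≤ x := by
      apply hx
      rintro y ⟨U, hU, hy⟩ hxy
      rcases hU with rfl | rfl
      · rw [Sublocale.mem_join_iff_aux] at hy
        apply hy
        rintro w ⟨V, ⟨c, rfl, rfl⟩, hw⟩ _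
        exact le_trans inf_le_right hw
      · rw [Sublocale.mem_join_iff_aux] at hy
        apply hy
        intro w hw hyw
        exact le_trans inf_le_left (hz w hw (hxy.trans hyw))
    rw [hb, le_himp_iff] at key
    rw [hb, le_himp_iff]
    simpa [inf_assoc] using key
  · rintro h S ⟨A, rfl⟩ hS
    have hA : ∃ a ∈ A, a ≠ ⊤ := by
      by_contra! hc
      apply hS
      ext x
      constructor
      · rintro ⟨M, hM, rfl⟩
        refine sInf_eq_top.2 fun m hm => ?_
        obtain ⟨V, ⟨c, hcA, rfl⟩, hw⟩ := hM hm
        have hw' : c ≤ m := hw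
        rw [hc c hcA] at hw'
        exact top_le_iff.1 hw'
      · rintro rfl
        exact ⟨∅, by simp, by simp⟩
    obtain ⟨a, haA, ha⟩ := hA
    have ho : Sublocale.open' a ≠ (Set.univ : Set L) := by
      intro hE
      obtain ⟨b, hb⟩ : a ∈ Sublocale.open' a := hE ▸ Set.mem_univ a
      have h1 : a ≤ b := by
        have h2 : a ≤ a ⇨ b := hb.le
        simpa using h2
      exact ha (hb.trans (himp_eq_top_iff.2 h1))
    obtain ⟨T, hTS, hT, hoT⟩ := h a ho
    refine ⟨T, hTS, hT, Set.eq_univ_of_forall fun x => ?_⟩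
    refine ⟨{x ⊔ a, a ⇨ x}, ?_, ?_⟩
    · rintro y (rfl | rfl)
      · refine ⟨_, Or.inl rfl, {x ⊔ a}, ?_, by simp⟩
        rintro _ rfl
        exact ⟨_, ⟨a, haA, rfl⟩, (le_sup_right : a ≤ x ⊔ a)⟩
      · exact ⟨_, Or.inr rfl, hoT ⟨x, rfl⟩⟩
    · rw [sInf_pair, inf_sup_right, inf_himp]
      apply le_antisymm
      · exact le_sup_of_le_left (le_inf le_rfl le_himp)
      · exact sup_le inf_le_left inf_le_right
end

section
/- Let L be a frame. Then every proper open sublocale of L is contained in a proper element of S_c(L) if and only if every proper open sublocale o(a) with o(a) dense (equivalently, with a ⇨ ⊥ = ⊥ in L) is contained in a proper element of S_c(L). -/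
/-- Let `L` be a frame. Then every proper open sublocale of `L` is
contained in a proper element of `S_c(L)` if and only if every proper open *dense*
sublocale `o(a)` (density of `o(a)` being equivalent to `a ⇨ ⊥ = ⊥`) is contained
in a proper element of `S_c(L)`. -/
theorem proper_open_iff_proper_open_dense_subset_proper_joinClosed
    {L : Type*} [Order.Frame L] :
    (∀ a : L, Sublocale.open' a ≠ (Set.univ : Set L) →
        ∃ T ∈ Sc L, T ≠ (Set.univ : Set L) ∧ Sublocale.open' a ⊆ T) ↔
    (∀ a : L, a ⇨ ⊥ = ⊥ → Sublocale.open' a ≠ (Set.univ : Set L) →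
        ∃ T ∈ Sc L, T ≠ (Set.univ : Set L) ∧ Sublocale.open' a ⊆ T) := by
  refine ⟨fun h a _ ha => h a ha, fun h a ha => ?_⟩
  by_cases hd : a ⇨ ⊥ = ⊥
  · exact h a hd ha
  · refine ⟨Sublocale.join (Sublocale.closed '' {a ⇨ ⊥}), ⟨_, rfl⟩, ?_, ?_⟩
    · intro hu
      have hb : (⊥ : L) ∈ Sublocale.join (Sublocale.closed '' {a ⇨ (⊥ : L)}) := by
        rw [hu]; trivial
      obtain ⟨M, hM, hbot⟩ := hb
      apply hd
      rw [eq_bot_iff, hbot]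
      refine le_sInf fun x hx => ?_
      have hx' := hM hx
      rw [Set.image_singleton, Set.sUnion_singleton] at hx'
      rw [← hbot]
      exact hx'
    · rintro x ⟨b, rfl⟩
      refine ⟨{a ⇨ b}, ?_, by simp⟩
      rw [Set.image_singleton, Set.sUnion_singleton, Set.singleton_subset_iff]
      exact himp_le_himp_left bot_le
end

section
/- Let K = K(Ω(ℝ)) = {(U,V) : U open in ℝ, V regular open in ℝ, U ⊆ V}, a frame under componentwise order. Then S_c(K) is weakly subfit: for every S ∈ S_c(K) with S ≠ {⊤}, there exists T ∈ S_c(K) with T ≠ K and S ⋁ T = K. -/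
open Set

/-- A subset of ℝ is *regular open* if it equals the interior of its closure. -/
def IsRegOpen (s : Set ℝ) : Prop := s = interior (closure s)

lemma isRegOpen_interior_closure (s : Set ℝ) : IsRegOpen (interior (closure s)) := by
  refine subset_antisymm (interior_maximal subset_closure isOpen_interior) ?_
  have h : closure (interior (closure s)) ⊆ closure s := by
    simpa [closure_closure] using closure_mono (interior_subset (s := closure s))
  exact interior_mono h

lemma isRegOpen_univ : IsRegOpen (univ : Set ℝ) := by
  simp [IsRegOpen]

lemma IsRegOpen.isOpen {s : Set ℝ} (hs : IsRegOpen s) : IsOpen s := by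
  rw [hs]; exact isOpen_interior

lemma isRegOpen_iInter_prop {P : Prop} {V : Set ℝ} (h : IsRegOpen V) :
    IsRegOpen (⋂ _ : P, V) := by
  by_cases hp : P
  · simpa [hp] using h
  · simp [hp, isRegOpen_univ]

lemma isRegOpen_interior_iInter {ι : Sort*} {V : ι → Set ℝ} (h : ∀ i, IsRegOpen (V i)) :
    IsRegOpen (interior (⋂ i, V i)) := by
  refine subset_antisymm (interior_maximal subset_closure isOpen_interior) ?_
  refine interior_maximal (subset_iInter fun i => ?_) isOpen_interior
  have h1 : interior (closure (interior (⋂ i, V i))) ⊆ interior (closure (V i)) :=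
    interior_mono (closure_mono (interior_subset.trans (iInter_subset V i)))
  exact h1.trans (h i).symm.subset

lemma IsRegOpen.inter {s t : Set ℝ} (hs : IsRegOpen s) (ht : IsRegOpen t) :
    IsRegOpen (s ∩ t) := by
  refine subset_antisymm (interior_maximal subset_closure (hs.isOpen.inter ht.isOpen)) ?_
  refine subset_inter ?_ ?_
  · exact (interior_mono (closure_mono inter_subset_left)).trans hs.symm.subset
  · exact (interior_mono (closure_mono inter_subset_right)).trans ht.symm.subset

/-- The frame `K(Ω(ℝ))`: pairs `(U, V)` with `U` open in ℝ, `V` regular open in ℝ and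
`U ⊆ V`, ordered componentwise by inclusion. -/
def KOmegaR : Type := {p : Set ℝ × Set ℝ // IsOpen p.1 ∧ IsRegOpen p.2 ∧ p.1 ⊆ p.2}

namespace KOmegaR

instance : PartialOrder KOmegaR := Subtype.partialOrder _

/-- The top element `(ℝ, ℝ)` of `K(Ω(ℝ))`. -/
def top : KOmegaR := ⟨(univ, univ), isOpen_univ, isRegOpen_univ, subset_rfl⟩

/-- Infima in `K(Ω(ℝ))` are given by `(interior ⋂ᵢ Uᵢ, interior ⋂ᵢ Vᵢ)`. -/
noncomputable def inf (S : Set KOmegaR) : KOmegaR :=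
  ⟨(interior (⋂ p ∈ S, (p : KOmegaR).1.1), interior (⋂ p ∈ S, (p : KOmegaR).1.2)),
    isOpen_interior,
    isRegOpen_interior_iInter fun p => isRegOpen_iInter_prop p.2.2.1,
    interior_mono (iInter₂_mono fun p _ => p.2.2.2)⟩

/-- Suprema in `K(Ω(ℝ))` are given by `(⋃ᵢ Uᵢ, interior (closure (⋃ᵢ Vᵢ)))`. -/
noncomputable def sup (S : Set KOmegaR) : KOmegaR :=
  ⟨(⋃ p ∈ S, (p : KOmegaR).1.1, interior (closure (⋃ p ∈ S, (p : KOmegaR).1.2))),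
    isOpen_biUnion fun p _ => p.2.1,
    isRegOpen_interior_closure _,
    interior_maximal ((iUnion₂_mono fun p _ => p.2.2.2).trans subset_closure)
      (isOpen_biUnion fun p _ => p.2.1)⟩

/-- The binary meet in `K(Ω(ℝ))` is the componentwise intersection. -/
def meet (a b : KOmegaR) : KOmegaR :=
  ⟨(a.1.1 ∩ b.1.1, a.1.2 ∩ b.1.2),
    a.2.1.inter b.2.1, a.2.2.1.inter b.2.2.1,
    inter_subset_inter a.2.2.2 b.2.2.2⟩

/-- The Heyting implication in the frame `K(Ω(ℝ))`:
`a ⇨ b` is the largest `x` with `x ⊓ a ≤ b`. -/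
noncomputable def himp (a b : KOmegaR) : KOmegaR :=
  sup {x : KOmegaR | meet x a ≤ b}

/-- The closed sublocale `c(a) = {x | a ≤ x}` of `K(Ω(ℝ))`. -/
def closedSl (a : KOmegaR) : Set KOmegaR := {x | a ≤ x}

/-- The open sublocale `o(a) = {a ⇨ b | b}` of `K(Ω(ℝ))`. -/
noncomputable def openSl (a : KOmegaR) : Set KOmegaR := {x | ∃ b : KOmegaR, x = himp a b}

/-- The join, in the coframe of sublocales of `K(Ω(ℝ))`, of a collection `𝒮` of
sublocales: it consists of all infima of subsets of `⋃₀ 𝒮`. -/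
noncomputable def slJoin (𝒮 : Set (Set KOmegaR)) : Set KOmegaR :=
  {x | ∃ M : Set KOmegaR, M ⊆ ⋃₀ 𝒮 ∧ x = inf M}

/-- `S_c(K(Ω(ℝ)))`: all joins of families of closed sublocales. -/
noncomputable def Sc : Set (Set KOmegaR) :=
  {S | ∃ A : Set KOmegaR, S = slJoin (closedSl '' A)}

end KOmegaR

namespace KOmegaR

lemma inf_singleton (p : KOmegaR) : inf {p} = p := by
  apply Subtype.ext
  apply Prod.ext
  · simp [inf, p.2.1.interior_eq]
  · simp [inf, p.2.2.1.isOpen.interior_eq]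

/-- The prime element `(ℝ ∖ {x}, ℝ)`. -/
def pt (x : ℝ) : KOmegaR := ⟨({x}ᶜ, univ), isOpen_compl_singleton, isRegOpen_univ, subset_univ _⟩

/-- Enlarge an element by a ball around `x`. -/
def enl (a : KOmegaR) (x ε : ℝ) : KOmegaR :=
  ⟨(a.1.1 ∪ Metric.ball x ε, interior (closure (a.1.2 ∪ Metric.ball x ε))),
    a.2.1.union Metric.isOpen_ball, isRegOpen_interior_closure _,
    interior_maximal ((union_subset_union_left _ a.2.2.2).trans subset_closure)
      (a.2.1.union Metric.isOpen_ball)⟩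

lemma mem_slJoin_of_mem {𝒮 : Set (Set KOmegaR)} {S : Set KOmegaR} (hS : S ∈ 𝒮) {p : KOmegaR}
    (hp : p ∈ S) : p ∈ slJoin 𝒮 :=
  ⟨{p}, by simpa using ⟨S, hS, hp⟩, (inf_singleton p).symm⟩

lemma inf_subset_of_top {M : Set KOmegaR} (h : ∀ p ∈ M, p = top) : inf M = top := by
  have h1 : (⋂ p ∈ M, (p : KOmegaR).1.1) = univ := by
    simp only [iInter_eq_univ]
    intro p hp
    rw [h p hp]; rfl
  have h2 : (⋂ p ∈ M, (p : KOmegaR).1.2) = univ := by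
    simp only [iInter_eq_univ]
    intro p hp
    rw [h p hp]; rfl
  apply Subtype.ext
  apply Prod.ext
  · simp [inf, h1, top]
  · simp [inf, h2, top]

lemma eq_top_of {p : KOmegaR} (h : p.1.1 = univ) : p = top := by
  apply Subtype.ext
  apply Prod.ext
  · exact h
  · exact univ_subset_iff.1 (h ▸ p.2.2.2)

lemma inf_enl (a : KOmegaR) (x : ℝ) (hx : x ∉ a.1.1) :
    inf (insert (pt x) {b | ∃ ε > 0, b = enl a x ε}) = a := by
  set M : Set KOmegaR := insert (pt x) {b | ∃ ε > 0, b = enl a x ε} with hM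
  have hmem : ∀ ε > 0, enl a x ε ∈ M := fun ε h => Or.inr ⟨ε, h, rfl⟩
  apply Subtype.ext
  apply Prod.ext
  · apply subset_antisymm
    · intro z hz
      have hz := interior_subset hz
      simp only [mem_iInter] at hz
      have hzx : z ≠ x := hz (pt x) (Or.inl rfl)
      rcases hz _ (hmem _ (dist_pos.2 hzx)) with h | h
      · exact h
      · exact absurd (Metric.mem_ball.1 h) (lt_irrefl _)
    · refine interior_maximal (subset_iInter₂ ?_) a.2.1
      rintro p (rfl | ⟨ε, -, rfl⟩)
      · intro z hz h
        exact hx ((mem_singleton_iff.1 h) ▸ hz)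
      · exact subset_union_left
  · apply subset_antisymm
    · change interior (⋂ p ∈ M, (p : KOmegaR).1.2) ⊆ a.1.2
      set W := interior (⋂ p ∈ M, (p : KOmegaR).1.2) with hW
      have hWo : IsOpen W := isOpen_interior
      have h1 : W ∩ {x}ᶜ ⊆ closure a.1.2 := by
        rintro z ⟨hz, hzx⟩
        have hz := interior_subset hz
        simp only [mem_iInter] at hz
        have hd : 0 < dist z x := dist_pos.2 hzx
        have h := interior_subset (hz _ (hmem (dist z x / 2) (by linarith)))
        rw [closure_union] at h
        rcases h with h | h
        · exact h
        · have := Metric.mem_closedBall.1 (Metric.closure_ball_subset_closedBall h)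
          linarith
      have h2 : W ⊆ closure (W ∩ {x}ᶜ) :=
        (dense_compl_singleton x).open_subset_closure_inter hWo
      have h3 : W ⊆ closure a.1.2 := h2.trans (closure_minimal h1 isClosed_closure)
      have h4 := interior_maximal h3 hWo
      rwa [← a.2.2.1] at h4
    · refine interior_maximal (subset_iInter₂ ?_) a.2.2.1.isOpen
      rintro p (rfl | ⟨ε, -, rfl⟩)
      · exact subset_univ _
      · exact interior_maximal (subset_union_left.trans subset_closure) a.2.2.1.isOpen

end KOmegaR

/-- `S_c(K(Ω(ℝ)))` is weakly subfit: for every `S ∈ S_c(K)` with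
`S ≠ {⊤}` there exists `T ∈ S_c(K)` with `T ≠ K` and `S ⋁ T = K`. -/
theorem Sc_KOmegaR_weaklySubfit :
    ∀ S ∈ KOmegaR.Sc, S ≠ {KOmegaR.top} →
      ∃ T ∈ KOmegaR.Sc, T ≠ (Set.univ : Set KOmegaR) ∧
        KOmegaR.slJoin {S, T} = Set.univ := by
  rintro S ⟨A, rfl⟩ hS
  have hA : ∃ a ∈ A, a ≠ KOmegaR.top := by
    by_contra! hA
    apply hS
    ext z
    constructor
    · rintro ⟨M, hM, rfl⟩
      apply KOmegaR.inf_subset_of_top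
      intro p hp
      obtain ⟨_, ⟨a, ha, rfl⟩, hap⟩ := hM hp
      rw [hA a ha] at hap
      exact KOmegaR.eq_top_of (univ_subset_iff.1 hap.1)
    · rintro rfl
      exact ⟨∅, empty_subset _, (KOmegaR.inf_subset_of_top (by simp)).symm⟩
  obtain ⟨a, ha, hat⟩ := hA
  obtain ⟨x, hx⟩ : ∃ x, x ∉ a.1.1 := by
    by_contra! h
    exact hat (KOmegaR.eq_top_of (eq_univ_of_forall h))
  have hpS : KOmegaR.pt x ∈ KOmegaR.slJoin (KOmegaR.closedSl '' A) := by
    refine KOmegaR.mem_slJoin_of_mem (mem_image_of_mem _ ha) ?_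
    refine ⟨?_, subset_univ _⟩
    intro z hz h
    exact hx ((mem_singleton_iff.1 h) ▸ hz)
  have hT : ∀ b : KOmegaR, x ∈ b.1.1 →
      b ∈ KOmegaR.slJoin (KOmegaR.closedSl '' {b | x ∈ b.1.1}) := fun b hb =>
    KOmegaR.mem_slJoin_of_mem (𝒮 := KOmegaR.closedSl '' {b | x ∈ b.1.1}) (S := KOmegaR.closedSl b) (Exists.intro b (And.intro hb rfl)) (le_refl b)
  refine ⟨KOmegaR.slJoin (KOmegaR.closedSl '' {b | x ∈ b.1.1}), ⟨_, rfl⟩, ?_, ?_⟩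
  · intro h
    obtain ⟨M, hM, hp⟩ : KOmegaR.pt x ∈ KOmegaR.slJoin (KOmegaR.closedSl '' {b | x ∈ b.1.1}) :=
      h ▸ mem_univ _
    have hMt : ∀ q ∈ M, q = KOmegaR.top := by
      intro q hq
      obtain ⟨_, ⟨b, hb, rfl⟩, hbq⟩ := hM hq
      apply KOmegaR.eq_top_of
      apply eq_univ_of_forall
      intro z
      by_cases hz : z = x
      · exact hz ▸ hbq.1 hb
      · have h1 : z ∈ (KOmegaR.inf M).1.1 := hp ▸ hz
        have h2 := interior_subset h1
        simp only [mem_iInter] at h2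
        exact h2 q hq
    rw [KOmegaR.inf_subset_of_top hMt] at hp
    have h3 : x ∈ (KOmegaR.pt x).1.1 := hp ▸ mem_univ x
    exact h3 rfl
  · refine eq_univ_of_forall fun c => ?_
    by_cases hc : x ∈ c.1.1
    · exact KOmegaR.mem_slJoin_of_mem (Or.inr rfl) (hT c hc)
    · refine ⟨_, ?_, (KOmegaR.inf_enl c x hc).symm⟩
      rintro p (rfl | ⟨ε, hε, rfl⟩)
      · exact ⟨_, Or.inl rfl, hpS⟩
      · exact ⟨_, Or.inr rfl, hT _ (Or.inr (Metric.mem_ball_self hε))⟩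
end

section
/- Let L be a weakly subfit frame. Then for every a ∈ L, the pseudocomplement satisfies a* = ⨅ {x ∈ L : x ⊔ a = ⊤}. -/
/-- Let `L` be a weakly subfit frame (for every `a ≠ ⊥` there is `c ≠ ⊤`
with `a ⊔ c = ⊤`). Then for every `a ∈ L` the pseudocomplement `a* = aᶜ = a ⇨ ⊥`
satisfies `a* = ⨅ {x ∈ L | x ⊔ a = ⊤}`. -/
theorem weaklySubfit_pseudocomplement_eq_sInf
    {L : Type*} [Order.Frame L]
    (hws : ∀ a : L, a ≠ ⊥ → ∃ c : L, c ≠ ⊤ ∧ a ⊔ c = ⊤) (a : L) :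
    aᶜ = sInf {x : L | x ⊔ a = ⊤} := by
  apply le_antisymm
  · refine le_sInf fun x hx => ?_
    have hx' : x ⊔ a = ⊤ := hx
    calc aᶜ = aᶜ ⊓ (x ⊔ a) := by rw [hx', inf_top_eq]
      _ = aᶜ ⊓ x := by rw [inf_sup_left, compl_inf_self, sup_bot_eq]
      _ ≤ x := inf_le_right
  · rw [le_compl_iff_disjoint_right, disjoint_iff]
    by_contra h
    obtain ⟨c, hc, hac⟩ := hws _ h
    have hca : c ⊔ a = ⊤ := by
      rw [eq_top_iff, ← hac]
      exact sup_le (inf_le_right.trans le_sup_right) le_sup_left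
    have hle : sInf {x : L | x ⊔ a = ⊤} ≤ c := sInf_le hca
    apply hc
    rw [← hac]
    exact (sup_eq_right.mpr (inf_le_left.trans hle)).symm
end

section
/- Let L be a weakly subfit frame which is also a coframe (binary joins distribute over arbitrary meets). Then every element of L is complemented: for every a ∈ L, a ⊔ a* = ⊤ (where a* is the pseudocomplement), so L is a Boolean algebra. -/
/-- Let `L` be a weakly subfit frame which is also a coframe (binary
joins distribute over arbitrary meets). Then every element of `L` is complemented:
`a ⊔ aᶜ = ⊤` for every `a` (where `aᶜ = a ⇨ ⊥` is the pseudocomplement), so `L` is a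
Boolean algebra. -/
theorem weaklySubfit_coframe_complemented
    {L : Type*} [Order.Frame L]
    (hws : ∀ a : L, a ≠ ⊥ → ∃ c : L, c ≠ ⊤ ∧ a ⊔ c = ⊤)
    (hcoframe : ∀ (a : L) (s : Set L), a ⊔ sInf s = ⨅ b ∈ s, a ⊔ b) :
    ∀ a : L, a ⊔ aᶜ = ⊤ := by
  intro a
  -- the least `c` with `a ⊔ c = ⊤`
  have hc : a ⊔ sInf {x : L | a ⊔ x = ⊤} = ⊤ := by
    rw [hcoframe]
    exact le_antisymm le_top (le_iInf fun b => le_iInf fun hb => le_of_eq (Eq.symm hb))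
  have hd : a ⊓ sInf {x : L | a ⊔ x = ⊤} = ⊥ := by
    by_contra hne
    obtain ⟨d, hd, hjoin⟩ := hws _ hne
    have h1 : a ⊔ d = ⊤ :=
      top_le_iff.mp (hjoin ▸ sup_le_sup_right inf_le_left d)
    have h2 : sInf {x : L | a ⊔ x = ⊤} ≤ d := sInf_le h1
    apply hd
    rw [← hjoin]
    exact (sup_eq_right.mpr (inf_le_right.trans h2)).symm
  have hle : sInf {x : L | a ⊔ x = ⊤} ≤ aᶜ :=
    le_compl_iff_disjoint_left.mpr (disjoint_iff.mpr hd)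
  exact top_le_iff.mp (hc ▸ sup_le_sup_left hle a)
end

section
/- Let X be a topological space. Then X is symmetric (for all x, y ∈ X, if x ∈ closure {y} then y ∈ closure {x}) if and only if every proper open subset of X is contained in a proper union of closed subsets, i.e. for every open U ⊊ X there exists A ∈ U_c(X) with A ≠ X and U ⊆ A. -/
/-- `U_c(X)`: the collection of all subsets of a topological space `X` that are unions
of (arbitrary families of) closed subsets of `X`. -/
def Uc (X : Type*) [TopologicalSpace X] : Set (Set X) :=
  {A | ∃ 𝒞 : Set (Set X), (∀ C ∈ 𝒞, IsClosed C) ∧ A = ⋃₀ 𝒞}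

/-- A topological space `X` is symmetric (its specialization preorder is
symmetric: `x ∈ closure {y}` implies `y ∈ closure {x}`) if and only if every proper
open subset of `X` is contained in a proper union of closed subsets. -/
theorem symmetric_iff_proper_open_subset_proper_unionClosed
    {X : Type*} [TopologicalSpace X] :
    (∀ x y : X, x ∈ closure {y} → y ∈ closure {x}) ↔
    (∀ U : Set X, IsOpen U → U ≠ Set.univ →
        ∃ A ∈ Uc X, A ≠ Set.univ ∧ U ⊆ A) := by
  constructor
  · intro h U hU hne
    refine ⟨U, ⟨{C | IsClosed C ∧ C ⊆ U}, fun C hC => hC.1, ?_⟩, hne, subset_rfl⟩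
    apply Set.Subset.antisymm
    · intro x hx
      refine ⟨closure {x}, ⟨isClosed_closure, ?_⟩, subset_closure rfl⟩
      intro y hy
      obtain ⟨z, hz, hzy⟩ := mem_closure_iff.1 (h y x hy) U hU hx
      rw [Set.mem_singleton_iff] at hzy
      exact hzy ▸ hz
    · rintro x ⟨C, hC, hx⟩
      exact hC.2 hx
  · intro h x y hxy
    by_contra hy
    have hxx : x ∈ closure ({x} : Set X) := subset_closure rfl
    obtain ⟨A, ⟨F, hF, rfl⟩, hne, hsub⟩ := h (closure {x})ᶜ isClosed_closure.isOpen_compl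
      (fun e => (e ▸ Set.mem_univ x : x ∈ (closure ({x} : Set X))ᶜ) hxx)
    apply hne
    obtain ⟨C, hC, hyC⟩ := hsub hy
    have hxC : x ∈ C :=
      closure_minimal (Set.singleton_subset_iff.2 hyC) (hF C hC) hxy
    have hcl : closure {x} ⊆ C :=
      closure_minimal (Set.singleton_subset_iff.2 hxC) (hF C hC)
    apply Set.eq_univ_of_forall
    intro z
    by_cases hz : z ∈ closure ({x} : Set X)
    · exact ⟨C, hC, hcl hz⟩
    · exact hsub hz
end

section
/- Let X be a topological space. Then every proper open subset of X is contained in a proper union of closed subsets if and only if every proper dense open subset of X is contained in a proper union of closed subsets. (Here 'proper' means ≠ X, and a union of closed subsets is an element of U_c(X).) -/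
/-- In a topological space `X`, every proper open subset is contained in
a proper union of closed subsets if and only if every proper *dense* open subset is
contained in a proper union of closed subsets. -/
theorem proper_open_iff_proper_dense_open_subset_proper_unionClosed
    {X : Type*} [TopologicalSpace X] :
    (∀ U : Set X, IsOpen U → U ≠ Set.univ →
        ∃ A ∈ Uc X, A ≠ Set.univ ∧ U ⊆ A) ↔
    (∀ U : Set X, IsOpen U → Dense U → U ≠ Set.univ →
        ∃ A ∈ Uc X, A ≠ Set.univ ∧ U ⊆ A) := by
  refine ⟨fun h U hU _ hne => h U hU hne, fun h U hU hne => ?_⟩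
  by_cases hd : Dense U
  · exact h U hU hd hne
  · refine ⟨closure U, ⟨{closure U}, ?_, by simp⟩, ?_, subset_closure⟩
    · rintro C rfl
      exact isClosed_closure
    · exact fun hc => hd (dense_iff_closure_eq.mpr hc)
end

section
/- Let X be a topological space. Then U_c(X) is weakly subfit (for every A ∈ U_c(X) with A ≠ ∅ there exists B ∈ U_c(X) with B ≠ X and A ∪ B = X) if and only if every proper open subset of X is contained in a proper union of closed subsets, i.e. for every open U ⊊ X there exists A ∈ U_c(X) with A ≠ X and U ⊆ A. -/
/-- For a topological space `X`, the lattice `U_c(X)` is weakly subfit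
(for every `A ∈ U_c(X)` with `A ≠ ∅` there is `B ∈ U_c(X)` with `B ≠ X` and
`A ∪ B = X`) if and only if every proper open subset of `X` is contained in a proper
union of closed subsets. -/
theorem Uc_weaklySubfit_iff_proper_open_subset_proper_unionClosed
    {X : Type*} [TopologicalSpace X] :
    (∀ A ∈ Uc X, A ≠ (∅ : Set X) →
        ∃ B ∈ Uc X, B ≠ Set.univ ∧ A ∪ B = Set.univ) ↔
    (∀ U : Set X, IsOpen U → U ≠ Set.univ →
        ∃ A ∈ Uc X, A ≠ Set.univ ∧ U ⊆ A) := by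
  constructor
  · intro h U hU hne
    obtain ⟨B, hB, hB1, hB2⟩ := h Uᶜ ⟨{Uᶜ}, by simpa using hU, by simp⟩
      (by simpa [Set.compl_empty_iff] using hne)
    refine ⟨B, hB, hB1, fun x hx => ?_⟩
    have hx2 : x ∈ Uᶜ ∪ B := hB2 ▸ Set.mem_univ x
    exact hx2.resolve_left (fun hn => hn hx)
  · rintro h A ⟨S, hS, rfl⟩ hne
    obtain ⟨x, C, hC, hx⟩ := Set.nonempty_iff_ne_empty.mpr hne
    obtain ⟨B, hB, hB1, hB2⟩ := h Cᶜ (hS C hC).isOpen_compl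
      (fun he => (he ▸ Set.mem_univ x : x ∈ Cᶜ) hx)
    refine ⟨B, hB, hB1, Set.eq_univ_of_forall fun y => ?_⟩
    by_cases hy : y ∈ C
    · exact Or.inl ⟨C, hC, hy⟩
    · exact Or.inr (hB2 hy)
end

section
/- Let X be a topological space. Then every element of U_c(X) is complemented in U_c(X) (for every A ∈ U_c(X) there exists B ∈ U_c(X) with A ∩ B = ∅ and A ∪ B = X, i.e. U_c(X) is a Boolean algebra) if and only if U_c(X) is weakly subfit (for every A ∈ U_c(X) with A ≠ ∅ there exists B ∈ U_c(X) with B ≠ X and A ∪ B = X). -/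
theorem mem_Uc_iff_closure {X : Type*} [TopologicalSpace X] (A : Set X) :
    A ∈ Uc X ↔ ∀ x ∈ A, ∀ y ∈ closure ({x} : Set X), y ∈ A := by
  constructor
  · rintro ⟨C, hC, rfl⟩ x ⟨c, hc, hx⟩ y hy
    exact ⟨c, hc, closure_minimal (Set.singleton_subset_iff.2 hx) (hC c hc) hy⟩
  · intro h
    refine ⟨{c | IsClosed c ∧ c ⊆ A}, fun c hc => hc.1, ?_⟩
    ext x
    constructor
    · intro hx
      exact ⟨closure {x}, ⟨isClosed_closure, fun y hy => h x hx y hy⟩,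
        subset_closure rfl⟩
    · rintro ⟨c, hc, hx⟩
      exact hc.2 hx

/-- For a topological space `X`, every element of `U_c(X)` is
complemented in `U_c(X)` (i.e. `U_c(X)` is a Boolean algebra) if and only if
`U_c(X)` is weakly subfit. -/
theorem Uc_boolean_iff_weaklySubfit
    {X : Type*} [TopologicalSpace X] :
    (∀ A ∈ Uc X, ∃ B ∈ Uc X, A ∩ B = (∅ : Set X) ∧ A ∪ B = Set.univ) ↔
    (∀ A ∈ Uc X, A ≠ (∅ : Set X) →
        ∃ B ∈ Uc X, B ≠ Set.univ ∧ A ∪ B = Set.univ) := by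
  constructor
  · intro h A hA hne
    obtain ⟨B, hB, h1, h2⟩ := h A hA
    refine ⟨B, hB, ?_, h2⟩
    rintro rfl
    exact hne (by simpa using h1)
  · intro h
    have trans : ∀ {x y : X}, y ∈ closure ({x} : Set X) →
        closure ({y} : Set X) ⊆ closure {x} := fun hy =>
      closure_minimal (Set.singleton_subset_iff.2 hy) isClosed_closure
    have symm : ∀ x y : X, y ∈ closure ({x} : Set X) → x ∈ closure ({y} : Set X) := by
      intro x y hyx
      have self : y ∈ closure ({y} : Set X) := subset_closure rfl
      obtain ⟨B, hB, hne, hU⟩ := h (closure {y})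
        ((mem_Uc_iff_closure _).2 fun a ha b hb => trans ha hb)
        (Set.nonempty_iff_ne_empty.1 ⟨y, self⟩)
      obtain ⟨z, hz⟩ := (Set.ne_univ_iff_exists_notMem B).1 hne
      have cover : ∀ w, w ∈ closure ({y} : Set X) ∨ w ∈ B := fun w => by
        have : w ∈ closure ({y} : Set X) ∪ B := hU ▸ Set.mem_univ w
        exact this
      have hzy := (cover z).resolve_right hz
      exact (cover x).resolve_right fun hx =>
        hz ((mem_Uc_iff_closure B).1 hB x hx z (trans hyx hzy))
    intro A hA
    refine ⟨Aᶜ, (mem_Uc_iff_closure _).2 ?_, Set.inter_compl_self A, Set.union_compl_self A⟩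
    intro x hx y hy hyA
    exact hx ((mem_Uc_iff_closure A).1 hA y hyA x (symm x y hy))
end
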